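/- arXiv:2009.00129 — 2 statements merged into one kernel-verified Lean document; each statement's English description precedes it below -/
import Mathlib

section
/- Let M ∈ M_n(Z_p) and let χ_M = f_1 ··· f_r be a factorization of its characteristic polynomial in Z_p[t] where the factors are pairwise coprime in Q_p[t]. Then there exists U ∈ GL_n(Z_p) such that U M U⁻¹ is block upper triangular with r diagonal blocks, where the characteristic polynomial of the j-th diagonal block is f_j (i.e., the j-th block accounts exactly for the eigenvalues λ with f_j(λ) = 0). -/
open Matrix Polynomial

/-- If `h` annihilates `A`, then the characteristic polynomial of `A` divides a power of `h`. -/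
theorem Matrix.charpoly_dvd_pow_card_of_aeval_eq_zero {R n : Type*} [CommRing R] [Fintype n]
    [DecidableEq n] (A : Matrix n n R) {h : R[X]} (hA : aeval A h = 0) :
    A.charpoly ∣ h ^ Fintype.card n := by
  have hdvd : charmatrix A ∣ scalar n h - (C : R →+* R[X]).mapMatrix (aeval A h) := by
    clear hA
    induction h using Polynomial.induction_on' with
    | add p q hp hq =>
      convert dvd_add hp hq using 1
      rw [map_add, map_add, map_add]
      abel
    | monomial k a =>
      have hk : charmatrix A ∣ scalar n (X : R[X]) ^ k - (C : R →+* R[X]).mapMatrix A ^ k :=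
        (scalar_commute X (fun _ ↦ Commute.all _ _) _).sub_dvd_pow_sub_pow k
      convert hk.mul_right (scalar n (C a)) using 1
      rw [← C_mul_X_pow_eq_monomial, map_mul, map_mul (aeval A), aeval_C, aeval_X_pow, map_mul,
        map_pow, map_pow, sub_mul, ((scalar_commute (C a) (fun _ ↦ Commute.all _ _) _).eq)]
      congr 1
      rw [← (scalar_commute (C a) (fun _ ↦ Commute.all _ _) _).eq]
      congr 1
      ext i j : 1
      simp [algebraMap_matrix_apply, diagonal_apply, apply_ite C]
  rw [hA, map_zero, sub_zero] at hdvd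
  obtain ⟨Q, hQ⟩ := hdvd
  exact ⟨Q.det, by simpa [charpoly, det_mul, scalar_apply, det_diagonal] using congrArg det hQ⟩

open Module in
theorem LinearMap.exists_toMatrix_sumQuot_eq_fromBlocks {R V m n : Type*} [CommRing R]
    [AddCommGroup V] [Module R V] [Fintype m] [Fintype n] [DecidableEq m] [DecidableEq n]
    {W : Submodule R V} (bW : Basis m R W) (bQ : Basis n R (V ⧸ W)) (e : V →ₗ[R] V)
    (he : W ≤ W.comap e) :
    ∃ B, LinearMap.toMatrix (bW.sumQuot bQ) (bW.sumQuot bQ) e =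
      fromBlocks (LinearMap.toMatrix bW bW (e.restrict he)) B 0
        (LinearMap.toMatrix bQ bQ (W.mapQ W e he)) := by
  refine ⟨(LinearMap.toMatrix (bW.sumQuot bQ) (bW.sumQuot bQ) e).toBlocks₁₂, ?_⟩
  ext (i | j) (k | l)
  · simp only [Basis.sumQuot_inl, fromBlocks_apply₁₁, LinearMap.toMatrix_apply]
    exact bW.sumQuot_repr_inl_of_mem bQ _ (he (bW k).2) i
  · rfl
  · have : W.mkQ (e (bW k)) = 0 := by simpa using he (bW k).2
    simp [LinearMap.toMatrix_apply, this]
  · simp only [LinearMap.toMatrix_apply, Basis.sumQuot_repr_inr, fromBlocks_apply₂₂]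
    rw [← bW.sumQuot_inr bQ l, W.mapQ_apply, W.mkQ_apply]

theorem Polynomial.Monic.eq_of_mul_eq_mul_of_dvd {R : Type*} [CommRing R] [IsDomain R]
    {a b f g : R[X]} (hf : f.Monic) (hg : g.Monic) (ha : a.Monic) (hb : b.Monic)
    (h : a * b = f * g) (haf : a ∣ f) (hbg : b ∣ g) : a = f ∧ b = g := by
  obtain ⟨c, rfl⟩ := haf
  obtain ⟨d, rfl⟩ := hbg
  have hc := ha.of_mul_monic_left hf
  have hcd : c * d = 1 := by
    have : a * b * (c * d) = a * b * 1 := by rw [mul_one]; nth_rw 2 [h]; ring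
    exact mul_left_cancel₀ (ha.mul hb).ne_zero this
  have hc1 : c = 1 := hc.eq_one_of_isUnit (.of_mul_eq_one _ hcd)
  subst hc1
  simp_all

theorem LinearMap.apply_aeval_of_comp_eq_comp {R V V₂ : Type*} [CommRing R] [AddCommGroup V]
    [Module R V] [AddCommGroup V₂] [Module R V₂] {S : Module.End R V} {T : Module.End R V₂}
    (j : V →ₗ[R] V₂) (hj : j ∘ₗ S = T ∘ₗ j) (h : R[X]) (x : V) :
    j (aeval S h x) = aeval T h (j x) := by
  induction h using Polynomial.induction_on generalizing x with
  | C a => simp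
  | add p q hp hq => simp only [map_add, LinearMap.add_apply, hp, hq]
  | monomial k a hk =>
    rw [pow_succ, ← mul_assoc, map_mul _ _ X, map_mul _ _ X, Module.End.mul_apply,
      Module.End.mul_apply, hk, aeval_X, aeval_X]
    exact congrArg _ (LinearMap.congr_fun hj x)

theorem Polynomial.Monic.dvd_of_dvd_pow_of_dvd_mul {R K : Type*} [CommRing R] [Field K]
    {φ : R →+* K} (hφ : Function.Injective φ) {a f g : R[X]} {m : ℕ} (ha : a.Monic)
    (hcop : IsCoprime (f.map φ) (g.map φ)) (ham : a ∣ f ^ m) (hdvd : a ∣ f * g) : a ∣ f := by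
  rw [← map_dvd_map φ hφ ha]
  refine IsCoprime.dvd_of_dvd_mul_right (z := g.map φ) ?_ ?_
  · refine (hcop.pow_left (m := m)).of_isCoprime_of_dvd_left ?_
    simpa using Polynomial.map_dvd φ ham
  · simpa using Polynomial.map_dvd φ hdvd

open Module in
/-- A factorization of the characteristic polynomial into two factors, coprime over the field `K`,
is realised by a block upper triangular form: the first block comes from the saturated submodule
`ker f(M)`. -/
theorem Matrix.exists_conj_eq_fromBlocks {R K ι : Type*} [CommRing R] [IsDomain R]
    [IsPrincipalIdealRing R] [Field K] {φ : R →+* K} (hφ : Function.Injective φ)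
    [Fintype ι] [DecidableEq ι] (M : Matrix ι ι R) {f g : R[X]} (hf : f.Monic) (hg : g.Monic)
    (hM : M.charpoly = f * g) (hcop : IsCoprime (f.map φ) (g.map φ)) :
    ∃ (d m : ℕ) (P : Matrix (Fin d ⊕ Fin m) ι R) (Q : Matrix ι (Fin d ⊕ Fin m) R)
      (A : Matrix (Fin d) (Fin d) R) (B : Matrix (Fin d) (Fin m) R)
      (D : Matrix (Fin m) (Fin m) R), P * Q = 1 ∧ P * M * Q = fromBlocks A B 0 D ∧
        A.charpoly = f ∧ D.charpoly = g := by
  let T : End R (ι → R) := Matrix.toLin' M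
  let W := LinearMap.ker (aeval T f)
  have hT : aeval T f * aeval T g = 0 := by
    have h := LinearMap.aeval_self_charpoly T
    rwa [show T.charpoly = f * g by rw [Matrix.charpoly_toLin', hM], map_mul] at h
  have hcomm (h : R[X]) (x : ι → R) : aeval T h (T x) = T (aeval T h x) := by
    have : aeval T h * T = T * aeval T h := by
      simpa using congrArg (aeval T) (mul_comm h X)
    exact LinearMap.congr_fun this x
  have he : W ≤ W.comap T := fun x hx ↦ by
    simp only [W, Submodule.mem_comap, LinearMap.mem_ker] at hx ⊢
    rw [hcomm, hx, map_zero]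
  have : Module.Free R ((ι → R) ⧸ W) :=
    .of_equiv (LinearMap.quotKerEquivRange (aeval T f)).symm
  let bW := Module.finBasis R W
  let bQ := Module.finBasis R ((ι → R) ⧸ W)
  have hA : aeval (LinearMap.toMatrix bW bW (LinearMap.restrict (q := W) T he)) f = 0 := by
    have h0 : aeval (LinearMap.restrict (q := W) T he) f = 0 := by
      ext1 x
      exact Subtype.ext ((LinearMap.apply_aeval_of_comp_eq_comp
        (S := LinearMap.restrict (q := W) T he) W.subtype rfl f x).trans x.2)
    change aeval (LinearMap.toMatrixAlgEquiv bW (LinearMap.restrict (q := W) T he)) f = 0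
    rw [aeval_algHom_apply, h0, map_zero]
  have hD : aeval (LinearMap.toMatrix bQ bQ (W.mapQ W T he)) g = 0 := by
    have h0 : aeval (W.mapQ W T he) g = 0 := by
      refine LinearMap.ext fun y ↦ ?_
      obtain ⟨x, rfl⟩ := W.mkQ_surjective y
      rw [← LinearMap.apply_aeval_of_comp_eq_comp (S := T) W.mkQ rfl g x,
        LinearMap.zero_apply, W.mkQ_apply, Submodule.Quotient.mk_eq_zero]
      exact LinearMap.congr_fun hT x
    change aeval (LinearMap.toMatrixAlgEquiv bQ (W.mapQ W T he)) g = 0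
    rw [aeval_algHom_apply, h0, map_zero]
  obtain ⟨B, hB⟩ := LinearMap.exists_toMatrix_sumQuot_eq_fromBlocks bW bQ T he
  set A := LinearMap.toMatrix bW bW (LinearMap.restrict (q := W) T he)
  set D := LinearMap.toMatrix bQ bQ (W.mapQ W T he)
  let b := bW.sumQuot bQ
  let c := Pi.basisFun R ι
  have hAD : A.charpoly * D.charpoly = f * g := by
    rw [← charpoly_fromBlocks_zero₂₁ A B, ← hB, LinearMap.charpoly_toMatrix,
      Matrix.charpoly_toLin', hM]
  obtain ⟨h₁, h₂⟩ := hf.eq_of_mul_eq_mul_of_dvd hg A.charpoly_monic D.charpoly_monic hAD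
    (A.charpoly_monic.dvd_of_dvd_pow_of_dvd_mul hφ hcop
      (A.charpoly_dvd_pow_card_of_aeval_eq_zero hA) (hAD ▸ dvd_mul_right _ _))
    (D.charpoly_monic.dvd_of_dvd_pow_of_dvd_mul hφ hcop.symm
      (D.charpoly_dvd_pow_card_of_aeval_eq_zero hD)
      (mul_comm f g ▸ hAD ▸ dvd_mul_left _ _))
  refine ⟨_, _, b.toMatrix c, c.toMatrix b, A, B, D, b.toMatrix_mul_toMatrix_flip c, ?_, h₁, h₂⟩
  rw [← hB, ← basis_toMatrix_mul_linearMap_toMatrix_mul_basis_toMatrix b c b c]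
  congr 2
  simp [c, T]

theorem Matrix.charpoly_toSquareBlock_eq_of_range {R ι κ α : Type*} [CommRing R] [Fintype ι]
    [DecidableEq ι] [Fintype κ] [DecidableEq κ] [DecidableEq α] (M : Matrix ι ι R) {b : ι → α}
    {a : α} {g : κ → ι} (hg : Function.Injective g) (hb : ∀ i, b i = a ↔ i ∈ Set.range g) :
    (M.toSquareBlock b a).charpoly = (M.submatrix g g).charpoly := by
  let e : κ ≃ {i // b i = a} :=
    (Equiv.ofInjective g hg).trans (Equiv.subtypeEquivRight fun i ↦ (hb i).symm)
  rw [← charpoly_reindex e]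
  congr 1
  ext i j
  have h (x : {i // b i = a}) : g (e.symm x) = x := congrArg Subtype.val (e.apply_symm_apply x)
  simp [toSquareBlock_def, h]

/-- The block triangular form attached to a factorization of the characteristic polynomial over a
principal ideal domain with factors pairwise coprime over a field containing it. -/
theorem Matrix.exists_conj_blockTriangular {R K : Type*} [CommRing R] [IsDomain R]
    [IsPrincipalIdealRing R] [Field K] {φ : R →+* K} (hφ : Function.Injective φ) {n r : ℕ}
    (M : Matrix (Fin n) (Fin n) R) (f : Fin r → R[X]) (hf : ∀ j, (f j).Monic)
    (hM : M.charpoly = ∏ j, f j)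
    (hcop : ∀ j k, j ≠ k → IsCoprime ((f j).map φ) ((f k).map φ)) :
    ∃ (U V : Matrix (Fin n) (Fin n) R) (k : Fin n → Fin r), U * V = 1 ∧ Monotone k ∧
      (U * M * V).BlockTriangular k ∧ ∀ j, ((U * M * V).toSquareBlock k j).charpoly = f j := by
  induction r generalizing n with
  | zero =>
    have hn : n = 0 := by
      have := M.charpoly_natDegree_eq_dim
      simpa [hM] using this.symm
    subst hn
    exact ⟨1, 1, finZeroElim, by simp, fun i ↦ i.elim0, fun i ↦ i.elim0, fun j ↦ j.elim0⟩
  | succ r ih =>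
    rw [Fin.prod_univ_succ] at hM
    have hcop₀ : IsCoprime ((f 0).map φ) ((∏ j : Fin r, f j.succ).map φ) := by
      rw [Polynomial.map_prod]
      exact IsCoprime.prod_right fun j _ ↦ hcop _ _ (Fin.succ_ne_zero j).symm
    obtain ⟨d, m, P, Q, A, B, D, hPQ, hPMQ, hA, hD⟩ :=
      M.exists_conj_eq_fromBlocks hφ (hf 0) (monic_prod_of_monic _ _ fun j _ ↦ hf j.succ) hM hcop₀
    obtain rfl : d + m = n := by
      have h := congrArg natDegree hM
      rw [← hA, ← hD, A.charpoly_monic.natDegree_mul D.charpoly_monic] at h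
      simpa using h.symm
    obtain ⟨U, V, k, hUV, hk, htri, hchar⟩ := ih D (fun j ↦ f j.succ) (fun j ↦ hf _) hD
      fun i j hij ↦ hcop _ _ (by simpa using hij)
    let e : Fin d ⊕ Fin m ≃ Fin (d + m) := finSumFinEquiv
    let blk : Fin d ⊕ Fin m → Fin (r + 1) := Sum.elim (fun _ ↦ 0) (fun i ↦ (k i).succ)
    let N : Matrix (Fin d ⊕ Fin m) (Fin d ⊕ Fin m) R := fromBlocks A (B * V) 0 (U * D * V)
    let U₁ : Matrix (Fin d ⊕ Fin m) (Fin d ⊕ Fin m) R := fromBlocks 1 0 0 U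
    let V₁ : Matrix (Fin d ⊕ Fin m) (Fin d ⊕ Fin m) R := fromBlocks 1 0 0 V
    have hN : ((U₁ * P).submatrix e.symm id) * M *
        ((Q * V₁).submatrix id e.symm) = N.submatrix e.symm e.symm := by
      have h : U₁ * P * M * (Q * V₁) = N := by
        calc _ = U₁ * (P * M * Q) * V₁ := by
              simp only [Matrix.mul_assoc]
          _ = N := by simp [hPMQ, fromBlocks_multiply, N, U₁, V₁]
      rw [← h]
      rfl
    refine ⟨(U₁ * P).submatrix e.symm id,
      (Q * V₁).submatrix id e.symm, blk ∘ e.symm, ?_, ?_, ?_, fun j ↦ ?_⟩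
    · have h : U₁ * P * (Q * V₁) = 1 := by
        calc _ = U₁ * (P * Q) * V₁ := by
              simp only [Matrix.mul_assoc]
          _ = 1 := by simp [hPQ, fromBlocks_multiply, hUV, U₁, V₁]
      rw [← submatrix_mul _ _ _ _ _ Function.bijective_id, h, submatrix_one_equiv]
    · intro x y hxy
      obtain ⟨x, rfl⟩ := e.surjective x
      obtain ⟨y, rfl⟩ := e.surjective y
      rcases x with x | x <;> rcases y with y | y
      · simp [blk]
      · simp [blk]
      · simp only [e, finSumFinEquiv_apply_left, finSumFinEquiv_apply_right, Fin.le_def,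
          Fin.val_natAdd, Fin.val_castAdd] at hxy
        omega
      · simpa [blk, e] using hk (by simpa [e] using hxy)
    · rw [hN]
      intro x y hxy
      obtain ⟨x, rfl⟩ := e.surjective x
      obtain ⟨y, rfl⟩ := e.surjective y
      rcases x with x | x <;> rcases y with y | y
      · simp [blk] at hxy
      · simp [blk] at hxy
      · simp [N]
      · simpa [N] using htri (by simpa [blk] using hxy)
    · rw [hN]
      cases j using Fin.cases with
      | zero =>
        rw [← hA, charpoly_toSquareBlock_eq_of_range _ (g := e ∘ Sum.inl)
          (e.injective.comp Sum.inl_injective)]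
        · congr 1
          ext
          simp [N]
        · intro i
          obtain ⟨x | x, rfl⟩ := e.surjective i <;> simp [blk]
      | succ j =>
        rw [← hchar, charpoly_toSquareBlock_eq_of_range _
          (g := fun x : {i // k i = j} ↦ e (Sum.inr x.1))
          (e.injective.comp (Sum.inr_injective.comp Subtype.val_injective))]
        · congr 1
          ext
          simp [N, toSquareBlock_def]
        · intro i
          obtain ⟨x | x, rfl⟩ := e.surjective i <;> simp [blk, (Fin.succ_ne_zero j).symm]

/-- if `χ_M = f_1 ⋯ f_r` in `ℤ_p[t]` with pairwise coprime factors in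
`ℚ_p[t]`, then there is `U ∈ GL_n(ℤ_p)` conjugating `M` into block upper triangular form
with `r` diagonal blocks, the `j`-th block having characteristic polynomial `f j`. -/
theorem statement7 {p : ℕ} [Fact p.Prime] {n r : ℕ}
    (M : Matrix (Fin n) (Fin n) ℤ_[p]) (f : Fin r → Polynomial ℤ_[p])
    (hmonic : ∀ j, (f j).Monic)
    (hfact : M.charpoly = ∏ j, f j)
    (hcop : ∀ j k, j ≠ k →
      IsCoprime ((f j).map (PadicInt.Coe.ringHom (p := p)))
        ((f k).map (PadicInt.Coe.ringHom (p := p)))) :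
    ∃ U : Matrix (Fin n) (Fin n) ℤ_[p], IsUnit U ∧
      ∃ k : Fin n → Fin r, Monotone k ∧
        (∀ i i' : Fin n, k i' < k i → (U * M * U⁻¹) i i' = 0) ∧
        ∀ j : Fin r,
          Matrix.charpoly
            ((U * M * U⁻¹).submatrix
              (fun x : {i : Fin n // k i = j} => x.1)
              (fun x : {i : Fin n // k i = j} => x.1)) = f j := by
  obtain ⟨U, V, k, hUV, hk, htri, hchar⟩ :=
    M.exists_conj_blockTriangular (φ := PadicInt.Coe.ringHom) Subtype.val_injective f hmonic
      hfact hcop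
  rw [← Matrix.inv_eq_right_inv hUV] at htri hchar
  exact ⟨U, .of_mul_eq_one _ hUV, k, hk, fun i i' h ↦ htri h, hchar⟩
end

section
/- Let M ∈ M_n(Z_p) and let ν_1 < ν_2 < ... < ν_r be the distinct p-adic valuations of the eigenvalues of M (in an algebraic closure of Q_p). Then there exists U ∈ GL_n(Z_p) such that U M U⁻¹ is block upper triangular with r diagonal blocks, the j-th block having exactly the eigenvalues of M of valuation ν_j as its eigenvalues. -/
open Matrix Polynomial

/-- The ring hom `ℤ_[p] → AlgebraicClosure ℚ_[p]`. -/
noncomputable def padicToAlgClosure (p : ℕ) [Fact p.Prime] :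
    ℤ_[p] →+* AlgebraicClosure ℚ_[p] :=
  (algebraMap ℚ_[p] (AlgebraicClosure ℚ_[p])).comp PadicInt.Coe.ringHom

/-- The canonical extension of the `p`-adic absolute value to an algebraic element `x` of
the algebraic closure of `ℚ_p`: `|x| = |N(x)|^{1/deg}`, computed from the constant
coefficient of the minimal polynomial. -/
noncomputable def algAbs (p : ℕ) [Fact p.Prime] (x : AlgebraicClosure ℚ_[p]) : ℝ :=
  ‖(minpoly ℚ_[p] x).coeff 0‖ ^ ((1 : ℝ) / (minpoly ℚ_[p] x).natDegree)

namespace Matrix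

section Spectrum

variable {R L ι : Type*} [CommRing R] [Field L] [Fintype ι] [DecidableEq ι]

theorem eval_map_mem_spectrum_map_aeval (φ : R →+* L) (A : Matrix ι ι R) (Q : R[X]) {x : L}
    (hx : (A.charpoly.map φ).IsRoot x) :
    (Q.map φ).eval x ∈ spectrum L ((aeval A Q).map φ) := by
  have h : (aeval A Q).map φ = aeval (A.map φ) (Q.map φ) := by
    have hc : (algebraMap L (Matrix ι ι L)).comp φ =
        φ.mapMatrix.comp (algebraMap R (Matrix ι ι R)) := by
      ext r i j
      simp [Matrix.algebraMap_matrix_apply, apply_ite φ]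
    exact Polynomial.map_aeval_eq_aeval_map hc Q A
  rw [h]
  rw [← charpoly_map] at hx
  exact spectrum.subset_polynomial_aeval _ _ ⟨x, mem_spectrum_of_isRoot_charpoly hx, rfl⟩

/-- A polynomial annihilating a matrix vanishes at its eigenvalues. -/
theorem isRoot_map_of_aeval_eq_zero (φ : R →+* L) {A : Matrix ι ι R} {Q : R[X]}
    (hQ : aeval A Q = 0) {x : L} (hx : (A.charpoly.map φ).IsRoot x) : (Q.map φ).IsRoot x := by
  have h := eval_map_mem_spectrum_map_aeval φ A Q hx
  rw [hQ, Matrix.map_zero _ (map_zero φ), spectrum.mem_iff, sub_zero] at h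
  by_contra h0
  exact h ((IsUnit.mk0 _ h0).map (algebraMap L (Matrix ι ι L)))

/-- If a polynomial vanishes at some eigenvalue of a matrix, its value at the matrix is singular. -/
theorem det_aeval_eq_zero_of_isRoot {φ : R →+* L} (hφ : Function.Injective φ) (A : Matrix ι ι R)
    {Q : R[X]} {x : L} (hx : (A.charpoly.map φ).IsRoot x) (hQ : (Q.map φ).IsRoot x) :
    (aeval A Q).det = 0 := by
  have h := eval_map_mem_spectrum_map_aeval φ A Q hx
  rw [hQ.eq_zero, spectrum.zero_mem_iff, isUnit_iff_isUnit_det, isUnit_iff_ne_zero, not_not] at h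
  apply hφ
  rw [map_zero, ← h, RingHom.map_det, RingHom.mapMatrix_apply]

end Spectrum

section EigenvalueTriangular

variable {R L α ι κ : Type*} [CommRing R] [Field L] [LinearOrder α]
  [Fintype ι] [DecidableEq ι] [Fintype κ] [DecidableEq κ]

/-- The matrix `A` is block upper triangular for the block labels `k`, and the eigenvalues of the
diagonal block labelled `j` all have `v`-value `j`. -/
structure EigenvalueTriangular (φ : R →+* L) (v : L → α) (A : Matrix ι ι R) (k : ι → α) :
    Prop where
  blockTriangular : A.BlockTriangular k
  eq_of_isRoot : ∀ j x, ((A.toSquareBlock k j).charpoly.map φ).IsRoot x → v x = j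

variable {φ : R →+* L} {v : L → α}

theorem EigenvalueTriangular.submatrix {A : Matrix ι ι R} {k : ι → α}
    (h : EigenvalueTriangular φ v A k) (e : κ ≃ ι) :
    EigenvalueTriangular φ v (A.submatrix e e) (k ∘ e) where
  blockTriangular := h.blockTriangular.submatrix
  eq_of_isRoot j x hx := by
    apply h.eq_of_isRoot j x
    let eBlock : {i // (k ∘ e) i = j} ≃ {i // k i = j} := e.subtypeEquiv fun _ => Iff.rfl
    rw [← charpoly_reindex eBlock] at hx
    convert hx using 4
    ext a b
    simp [toSquareBlock_def, eBlock]

theorem EigenvalueTriangular.fromBlocks {A : Matrix ι ι R} {D : Matrix κ κ R} {k : ι → α}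
    {l : κ → α} (hA : EigenvalueTriangular φ v A k) (B : Matrix ι κ R)
    (hD : EigenvalueTriangular φ v D l) (hkl : ∀ i j, k i ≤ l j) :
    EigenvalueTriangular φ v (Matrix.fromBlocks A B 0 D) (Sum.elim k l) where
  blockTriangular := by
    rintro (i | i) (j | j) hij
    · exact hA.blockTriangular hij
    · exact absurd hij (hkl i j).not_gt
    · rfl
    · exact hD.blockTriangular hij
  eq_of_isRoot j x hx := by
    let e : {i // Sum.elim k l i = j} ≃ {i // k i = j} ⊕ {i // l i = j} := Equiv.subtypeSum
    have h : reindex e e ((Matrix.fromBlocks A B 0 D).toSquareBlock (Sum.elim k l) j) =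
        Matrix.fromBlocks (A.toSquareBlock k j) (B.submatrix Subtype.val Subtype.val) 0
          (D.toSquareBlock l j) := by
      ext (a | a) (b | b) <;> rfl
    rw [← charpoly_reindex e, h, charpoly_fromBlocks_zero₂₁, Polynomial.map_mul, root_mul] at hx
    exact hx.elim (hA.eq_of_isRoot j x) (hD.eq_of_isRoot j x)

theorem exists_isRoot_charpoly_map [IsAlgClosed L] [Nonempty ι] (φ : R →+* L) (A : Matrix ι ι R) :
    ∃ x, (A.charpoly.map φ).IsRoot x := by
  rw [← charpoly_map]
  apply IsAlgClosed.exists_root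
  rw [charpoly_degree_eq_dim]
  exact_mod_cast Fintype.card_ne_zero

theorem EigenvalueTriangular.exists_isRoot_of_isRoot {A : Matrix ι ι R} {k : ι → α}
    (h : EigenvalueTriangular φ v A k) {x : L} (hx : (A.charpoly.map φ).IsRoot x) :
    ∃ i, k i = v x := by
  rw [h.blockTriangular.charpoly, Polynomial.map_prod, isRoot_prod] at hx
  obtain ⟨j, hj, hx⟩ := hx
  obtain ⟨i, -, rfl⟩ := Finset.mem_image.1 hj
  exact ⟨i, (h.eq_of_isRoot _ x hx).symm⟩

theorem EigenvalueTriangular.exists_isRoot [IsAlgClosed L] {A : Matrix ι ι R} {k : ι → α}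
    (h : EigenvalueTriangular φ v A k) (i : ι) :
    ∃ x, (A.charpoly.map φ).IsRoot x ∧ v x = k i := by
  have : Nonempty {i' // k i' = k i} := ⟨⟨i, rfl⟩⟩
  obtain ⟨x, hx⟩ := exists_isRoot_charpoly_map φ (A.toSquareBlock k (k i))
  refine ⟨x, ?_, h.eq_of_isRoot _ x hx⟩
  rw [h.blockTriangular.charpoly, Polynomial.map_prod, isRoot_prod]
  exact ⟨k i, Finset.mem_image_of_mem k (Finset.mem_univ i), hx⟩

end EigenvalueTriangular

end Matrix

namespace LinearMap

theorem coe_aeval_restrict {R V : Type*} [CommRing R] [AddCommGroup V] [Module R V]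
    {W : Submodule R V} {f : V →ₗ[R] V} (hf : W ≤ W.comap f) (Q : R[X]) (w : W) :
    (aeval (f.restrict hf) Q w : V) = aeval f Q w := by
  induction Q using Polynomial.induction_on' generalizing w with
  | add P Q hP hQ => simp [hP, hQ]
  | monomial n a =>
    have h : ∀ n : ℕ, (((f.restrict hf) ^ n) w : V) = (f ^ n) w := by
      intro n
      induction n with
      | zero => rfl
      | succ n ih =>
        rw [pow_succ', pow_succ', Module.End.mul_apply, Module.End.mul_apply, ← ih]
        rfl
    simp [aeval_monomial, h]

variable {R L V : Type*} [CommRing R] [Field L] [AddCommGroup V] [Module R V]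

/-- The matrix of an endomorphism in a basis adapted to an invariant submodule is block
triangular. -/
theorem toMatrix_sumQuot {ι κ : Type*} [Fintype ι] [DecidableEq ι] [Fintype κ] [DecidableEq κ]
    {W : Submodule R V} (bW : Module.Basis ι R W) (bQ : Module.Basis κ R (V ⧸ W))
    (f : V →ₗ[R] V) (hf : W ≤ W.comap f) :
    toMatrix (bW.sumQuot bQ) (bW.sumQuot bQ) f =
      Matrix.fromBlocks (toMatrix bW bW (f.restrict hf))
        (Matrix.of fun i l => (bW.sumQuot bQ).repr (f (bW.sumQuot bQ (Sum.inr l))) (Sum.inl i))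
        0 (toMatrix bQ bQ (W.mapQ W f hf)) := by
  ext (i | i) (j | j)
  · simp only [Module.Basis.sumQuot_inl, Matrix.fromBlocks_apply₁₁, toMatrix_apply]
    exact Module.Basis.sumQuot_repr_inl_of_mem ..
  · simp [toMatrix_apply]
  · have h : W.mkQ (f (bW j)) = 0 := by
      rw [← mem_ker, Submodule.ker_mkQ]
      exact hf (bW j).2
    simp [toMatrix_apply, h]
  · simp only [toMatrix_apply, Module.Basis.sumQuot_repr_inr, Matrix.fromBlocks_apply₂₂]
    rw [← Module.Basis.sumQuot_inr bW bQ j, W.mapQ_apply]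
    simp

/-- Over a principal ideal domain, an endomorphism of a finite free module has a basis in which its
matrix is block triangular with eigenvalues grouped by their value under `v`, provided that `v` is
constant on the roots of polynomials over `R`, in the sense of `hv`. -/
theorem exists_basis_eigenvalueTriangular [IsDomain R] [IsPrincipalIdealRing R] [IsAlgClosed L]
    {α : Type*} [LinearOrder α] {φ : R →+* L} (hφ : Function.Injective φ) {v : L → α}
    (hv : ∀ x, ∃ Q : R[X], (Q.map φ).IsRoot x ∧ ∀ y, (Q.map φ).IsRoot y → v y = v x)
    [Module.Free R V] [Module.Finite R V] (f : V →ₗ[R] V) :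
    ∃ (ι : Type) (_ : Fintype ι) (_ : DecidableEq ι) (b : Module.Basis ι R V) (k : ι → α),
      Matrix.EigenvalueTriangular φ v (toMatrix b b f) k := by
  induction hn : Module.finrank R V using Nat.strong_induction_on generalizing V with
  | _ n ih =>
  subst hn
  let b₀ := Module.finBasis R V
  rcases Nat.eq_zero_or_pos (Module.finrank R V) with h0 | hpos
  · have : IsEmpty (Fin (Module.finrank R V)) := by rw [h0]; infer_instance
    refine ⟨_, _, inferInstance, b₀, isEmptyElim, fun i => isEmptyElim i, fun j x hx => ?_⟩
    simp [Matrix.charpoly_isEmpty] at hx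
  have : Nonempty (Fin (Module.finrank R V)) := ⟨⟨0, hpos⟩⟩
  have hne : (toMatrix b₀ b₀ f).charpoly.map φ ≠ 0 :=
    ((Matrix.charpoly_monic _).map φ).ne_zero
  obtain ⟨x₀, hx₀⟩ := Matrix.exists_isRoot_charpoly_map φ (toMatrix b₀ b₀ f)
  classical
  obtain ⟨x, hx, hmin⟩ := Finset.exists_min_image
    ((toMatrix b₀ b₀ f).charpoly.map φ).roots.toFinset v
    ⟨x₀, Multiset.mem_toFinset.2 ((mem_roots hne).2 hx₀)⟩
  replace hx := (mem_roots hne).1 (Multiset.mem_toFinset.1 hx)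
  replace hmin : ∀ y, ((toMatrix b₀ b₀ f).charpoly.map φ).IsRoot y → v x ≤ v y := fun y hy =>
    hmin y (Multiset.mem_toFinset.2 ((mem_roots hne).2 hy))
  obtain ⟨Q, hQx, hQ⟩ := hv x
  let W : Submodule R V := ker (aeval f Q)
  have hf : W ≤ W.comap f := by
    intro w hw
    have hcomm : Commute (aeval f Q) f := by
      simpa using (Commute.all Q X).map (aeval f)
    rw [Submodule.mem_comap, mem_ker, ← Module.End.mul_apply, hcomm.eq, Module.End.mul_apply,
      mem_ker.1 hw, map_zero]
  have hW : W ≠ ⊥ := by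
    have hdet := Matrix.det_aeval_eq_zero_of_isRoot hφ _ hx hQx
    have haeval : aeval (toMatrix b₀ b₀ f) Q = toMatrix b₀ b₀ (aeval f Q) :=
      Polynomial.aeval_algHom_apply (toMatrixAlgEquiv b₀).toAlgHom f Q
    rw [haeval, det_toMatrix] at hdet
    exact (bot_lt_ker_of_det_eq_zero hdet).ne'
  have : Nontrivial W := Submodule.nontrivial_iff_ne_bot.2 hW
  have : Module.Free R (V ⧸ W) := Module.Free.of_equiv (aeval f Q).quotKerEquivRange.symm
  have hlt : Module.finrank R (V ⧸ W) < Module.finrank R V := by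
    have := W.finrank_quotient_add_finrank
    have := Module.finrank_pos (R := R) (M := W)
    omega
  obtain ⟨κ, _, _, bQ, l, hl⟩ := ih _ hlt (W.mapQ W f hf) rfl
  let bW := Module.finBasis R W
  have hblocks := toMatrix_sumQuot bW bQ f hf
  have hA : Matrix.EigenvalueTriangular φ v (toMatrix bW bW (f.restrict hf)) (fun _ => v x) := by
    refine ⟨fun i j hij => absurd hij (lt_irrefl _), fun j y hy => ?_⟩
    by_cases hj : v x = j
    · subst hj
      apply hQ y
      refine Matrix.isRoot_map_of_aeval_eq_zero φ (A := toMatrix bW bW (f.restrict hf)) ?_ ?_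
      · have haeval : aeval (toMatrix bW bW (f.restrict hf)) Q =
            toMatrix bW bW (aeval (f.restrict hf) Q) :=
          Polynomial.aeval_algHom_apply (toMatrixAlgEquiv bW).toAlgHom _ Q
        rw [haeval, map_eq_zero_iff _ (toMatrix bW bW).injective]
        ext w
        rw [coe_aeval_restrict]
        exact mem_ker.1 w.2
      · rw [← Matrix.charpoly_reindex (Equiv.subtypeUnivEquiv fun _ => rfl)] at hy
        exact hy
    · have : IsEmpty {_i : Fin (Module.finrank R W) // v x = j} := ⟨fun i => hj i.2⟩
      simp [Matrix.charpoly_isEmpty] at hy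
  refine ⟨_, inferInstance, inferInstance, bW.sumQuot bQ, _, hblocks ▸ hA.fromBlocks _ hl ?_⟩
  intro _ j
  obtain ⟨y, hy, hyj⟩ := hl.exists_isRoot j
  rw [← hyj]
  apply hmin
  rw [charpoly_toMatrix f b₀, ← charpoly_toMatrix f (bW.sumQuot bQ), hblocks,
    Matrix.charpoly_fromBlocks_zero₂₁, Polynomial.map_mul, root_mul]
  exact Or.inr hy

end LinearMap

/-- Every element of the algebraic closure is a root of an integral polynomial all of whose roots
have the same minimal polynomial over `ℚ_[p]`. -/
theorem exists_padicInt_polynomial_isRoot (p : ℕ) [Fact p.Prime] (x : AlgebraicClosure ℚ_[p]) :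
    ∃ Q : ℤ_[p][X], (Q.map (padicToAlgClosure p)).IsRoot x ∧
      ∀ y, (Q.map (padicToAlgClosure p)).IsRoot y → minpoly ℚ_[p] y = minpoly ℚ_[p] x := by
  have hint : IsIntegral ℚ_[p] x := Algebra.IsIntegral.isIntegral x
  obtain ⟨c, hc, hQ⟩ := IsLocalization.integerNormalization_spec
    (nonZeroDivisors ℤ_[p]) (minpoly ℚ_[p] x)
  set Q := IsLocalization.integerNormalization (nonZeroDivisors ℤ_[p]) (minpoly ℚ_[p] x)
  have hc0 : algebraMap ℤ_[p] ℚ_[p] c ≠ 0 := by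
    simpa using nonZeroDivisors.ne_zero hc
  have hroot (y) : (Q.map (padicToAlgClosure p)).IsRoot y ↔ aeval y (minpoly ℚ_[p] x) = 0 := by
    have h : Q.map (padicToAlgClosure p) = (Q.map (algebraMap ℤ_[p] ℚ_[p])).map
        (algebraMap ℚ_[p] (AlgebraicClosure ℚ_[p])) := by
      rw [Polynomial.map_map]; rfl
    rw [h, hQ, ← IsScalarTower.algebraMap_smul ℚ_[p], Polynomial.map_smul, IsRoot, eval_smul,
      smul_eq_zero_iff_right (by simpa using hc0), eval_map_algebraMap]
  refine ⟨Q, (hroot x).2 (minpoly.aeval _ _), fun y hy => ?_⟩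
  exact (minpoly.eq_of_irreducible_of_monic (minpoly.irreducible hint) ((hroot y).1 hy)
    (minpoly.monic hint)).symm

theorem padicToAlgClosure_injective (p : ℕ) [Fact p.Prime] :
    Function.Injective (padicToAlgClosure p) :=
  (algebraMap ℚ_[p] (AlgebraicClosure ℚ_[p])).injective.comp Subtype.val_injective

/-- Newton decomposition: if `ν_1 < ⋯ < ν_r` are the distinct valuations of
the eigenvalues of `M ∈ M_n(ℤ_p)` (so the absolute values `p^{-ν_j}` are the distinct
absolute values of the eigenvalues), then some `U ∈ GL_n(ℤ_p)` conjugates `M` into block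
upper triangular form with `r` diagonal blocks, the eigenvalues of the `j`-th block being
exactly those of valuation `ν_j`. -/
theorem statement8 {p : ℕ} [Fact p.Prime] {n r : ℕ}
    (M : Matrix (Fin n) (Fin n) ℤ_[p]) (ν : Fin r → ℝ) (hν : StrictMono ν)
    (hall : ∀ x : AlgebraicClosure ℚ_[p],
      (M.charpoly.map (padicToAlgClosure p)).IsRoot x →
        ∃ j, algAbs p x = (p : ℝ) ^ (-(ν j)))
    (hocc : ∀ j, ∃ x : AlgebraicClosure ℚ_[p],
      (M.charpoly.map (padicToAlgClosure p)).IsRoot x ∧ algAbs p x = (p : ℝ) ^ (-(ν j))) :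
    ∃ U : Matrix (Fin n) (Fin n) ℤ_[p], IsUnit U ∧
      ∃ k : Fin n → Fin r, Monotone k ∧ Function.Surjective k ∧
        (∀ i i' : Fin n, k i' < k i → (U * M * U⁻¹) i i' = 0) ∧
        ∀ j : Fin r, ∀ x : AlgebraicClosure ℚ_[p],
          ((Matrix.charpoly
              ((U * M * U⁻¹).submatrix
                (fun y : {i : Fin n // k i = j} => y.1)
                (fun y : {i : Fin n // k i = j} => y.1))).map
            (padicToAlgClosure p)).IsRoot x →
          algAbs p x = (p : ℝ) ^ (-(ν j)) := by
  rcases Nat.eq_zero_or_pos r with rfl | hr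
  · have hn : IsEmpty (Fin n) := by
      by_contra hn
      rw [not_isEmpty_iff] at hn
      obtain ⟨x, hx⟩ := Matrix.exists_isRoot_charpoly_map (padicToAlgClosure p) M
      exact (hall x hx).choose.elim0
    exact ⟨1, isUnit_one, isEmptyElim, fun i => isEmptyElim i, fun j => j.elim0,
      fun i => isEmptyElim i, fun j => j.elim0⟩
  have : Nonempty (Fin r) := ⟨⟨0, hr⟩⟩
  have hp : 1 < (p : ℝ) := by exact_mod_cast (Fact.out : p.Prime).one_lt
  have hinj : Function.Injective fun j => (p : ℝ) ^ (-(ν j)) := fun i j hij =>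
    hν.injective (neg_injective ((Real.rpow_right_inj (by positivity) hp.ne').1 hij))
  let v : AlgebraicClosure ℚ_[p] → Fin r := fun x =>
    Function.invFun (fun j => (p : ℝ) ^ (-(ν j))) (algAbs p x)
  have hv_eq {x j} (h : algAbs p x = (p : ℝ) ^ (-(ν j))) : v x = j := by
    simp only [v, h]
    exact Function.leftInverse_invFun hinj j
  have hv (x) : ∃ Q : ℤ_[p][X], (Q.map (padicToAlgClosure p)).IsRoot x ∧
      ∀ y, (Q.map (padicToAlgClosure p)).IsRoot y → v y = v x := by
    obtain ⟨Q, hx, hQ⟩ := exists_padicInt_polynomial_isRoot p x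
    exact ⟨Q, hx, fun y hy => by simp only [v, algAbs, hQ y hy]⟩
  obtain ⟨ι, _, _, b, k, h⟩ := LinearMap.exists_basis_eigenvalueTriangular
    (padicToAlgClosure_injective p) hv (Matrix.toLin' M)
  let b₀ := Pi.basisFun ℤ_[p] (Fin n)
  let e₀ : Fin n ≃ ι := b₀.indexEquiv b
  let e : Fin n ≃ ι := (Tuple.sort (k ∘ e₀)).trans e₀
  let b₁ := b.reindex e.symm
  have hUV : b₁.toMatrix b₀ * b₀.toMatrix b₁ = 1 := b₁.toMatrix_mul_toMatrix_flip b₀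
  have hconj : b₁.toMatrix b₀ * M * (b₁.toMatrix b₀)⁻¹ =
      (LinearMap.toMatrix b b (Matrix.toLin' M)).submatrix e e := by
    rw [Matrix.inv_eq_right_inv hUV]
    have hM : LinearMap.toMatrix b₀ b₀ (Matrix.toLin' M) = M := LinearMap.toMatrix'_toLin' M
    have hchange := basis_toMatrix_mul_linearMap_toMatrix_mul_basis_toMatrix b₁ b₀ b₁ b₀
      (Matrix.toLin' M)
    rw [hM] at hchange
    rw [hchange]
    ext i j
    simp [b₁, LinearMap.toMatrix_apply]
  replace h := h.submatrix e
  rw [← hconj] at h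
  have hroot {x} : (M.charpoly.map (padicToAlgClosure p)).IsRoot x ↔
      ((b₁.toMatrix b₀ * M * (b₁.toMatrix b₀)⁻¹).charpoly.map (padicToAlgClosure p)).IsRoot x := by
    rw [Matrix.inv_eq_right_inv hUV, Matrix.charpoly_mul_comm, ← mul_assoc,
      b₀.toMatrix_mul_toMatrix_flip b₁, one_mul]
  refine ⟨b₁.toMatrix b₀, IsUnit.of_mul_eq_one _ hUV, k ∘ e, Tuple.monotone_sort (k ∘ e₀), ?_,
    fun i i' hi => h.blockTriangular hi, fun j x hx => ?_⟩
  · intro j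
    obtain ⟨x, hx, hxj⟩ := hocc j
    obtain ⟨i, hi⟩ := h.exists_isRoot_of_isRoot (hroot.1 hx)
    exact ⟨i, hi.trans (hv_eq hxj)⟩
  · have hvx : v x = j := h.eq_of_isRoot j x hx
    have hxM : (M.charpoly.map (padicToAlgClosure p)).IsRoot x := by
      have hj : j ∈ Finset.univ.image (k ∘ e) := by
        by_contra hj
        have : IsEmpty {i : Fin n // (k ∘ e) i = j} :=
          ⟨fun i => hj (Finset.mem_image.2 ⟨i.1, Finset.mem_univ _, i.2⟩)⟩
        rw [Matrix.charpoly_isEmpty] at hx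
        simp at hx
      rw [hroot, h.blockTriangular.charpoly, Polynomial.map_prod, isRoot_prod]
      exact ⟨j, hj, hx⟩
    obtain ⟨j', hj'⟩ := hall x hxM
    rw [hj', ← hvx, hv_eq hj']
end
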